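/- With Θ as in the preceding context and the transported root-plugging σ ρ̃^{root} τ := Θ(Θ^{-1}(σ) ρ^{root} Θ^{-1}(τ)), for σ = X^k ∏_{i=1}^n I_{aᵢ}(σᵢ) and τ = X^{k̄} ∏_{i=1}^{n̄} I_{āᵢ}(τᵢ) one has the explicit formula σ ρ̃^{root} τ = Σ_{ℓ,ℓ̄} C(k̄, ℓ)·C(k, ℓ̄) · X^{k+k̄−|ℓ|−|ℓ̄|} ∏ᵢ I_{aᵢ−ℓᵢ}(σᵢ) ∏ᵢ I_{āᵢ−ℓ̄ᵢ}(τᵢ). In particular σ ρ̃^{root} τ = τ ρ̃^{root} σ. -/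

import Mathlib

/-- Planar rooted trees with vertex decorations in `V` and edge decorations in `E`. -/
inductive RT (V E : Type) : Type where
  | node : V → List (E × RT V E) → RT V E

/-- One-step reordering of children (at the root or at a deeper vertex). -/
inductive Swap {V E : Type} : RT V E → RT V E → Prop where
  | here (v : V) (l₁ l₂ : List (E × RT V E)) (p q : E × RT V E) :
      Swap (.node v (l₁ ++ p :: q :: l₂)) (.node v (l₁ ++ q :: p :: l₂))
  | child (v : V) (l₁ l₂ : List (E × RT V E)) (e : E) {t t' : RT V E} :
      Swap t t' → Swap (.node v (l₁ ++ (e, t) :: l₂)) (.node v (l₁ ++ (e, t') :: l₂))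

/-- (Non-planar) decorated rooted trees: planar trees modulo reordering of children. -/
def QT (V E : Type) : Type := Quot (@Swap V E)

/-- The linear span of decorated rooted trees, with rational coefficients. -/
abbrev Span (V E : Type) : Type := QT V E →₀ ℚ

def qt {V E : Type} (t : RT V E) : QT V E := Quot.mk _ t

/-- A tree, as a basis vector of the span. -/
noncomputable def bas {V E : Type} (t : RT V E) : Span V E := Finsupp.single (qt t) 1

/-- The element of the span given by a list of trees (sum with multiplicity). -/
noncomputable def ofList {V E : Type} (l : List (RT V E)) : Span V E := (l.map bas).sum

/-- Formal rational combination of planar trees, as an element of the span. -/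
noncomputable def combo {V E : Type} (l : List (ℚ × RT V E)) : Span V E :=
  (l.map fun p => p.1 • bas p.2).sum

mutual
/-- List of the graftings of `σ` on each vertex of a tree, via a new `a`-edge. -/
def graftT {V E : Type} (a : E) (σ : RT V E) : RT V E → List (RT V E)
  | .node v l => .node v ((a, σ) :: l) :: (graftL a σ l).map (.node v)
/-- Auxiliary: graftings of `σ` inside one of the listed subtrees. -/
def graftL {V E : Type} (a : E) (σ : RT V E) :
    List (E × RT V E) → List (List (E × RT V E))
  | [] => []
  | (e, t) :: r =>
      ((graftT a σ t).map fun t' => (e, t') :: r)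
        ++ ((graftL a σ r).map fun r' => (e, t) :: r')
end

/-- Multi-indices in `ℕ^{d+1}`. -/
abbrev Nd (d : ℕ) : Type := Fin (d + 1) → ℕ

/-- Componentwise binomial coefficient on `ℕ^{d+1}` (zero if some component exceeds). -/
def binom {d : ℕ} (n ℓ : Nd d) : ℕ := ∏ c, Nat.choose (n c) (ℓ c)

/-- Componentwise multinomial coefficient `C(m; ℓ₁, …, ℓ_n)` of a tuple of
multi-indices, as the iterated product of binomial coefficients (vanishing as soon as a
subtraction leaves `ℕ^{d+1}`). -/
def ndMnom {d : ℕ} (m : Nd d) {n : ℕ} (L : Fin n → Nd d) : ℕ :=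
  ∏ i : Fin n, binom (m - ∑ j ∈ Finset.univ.filter (· < i), L j) (L i)

/-- Plugging of `σ` at the root of `τ`: the two roots are identified, their (additive)
decorations are added, and the root branches are joined. -/
def plugRoot {V E : Type} [AddCommMonoid V] : RT V E → RT V E → RT V E
  | .node v l, .node w m => .node (v + w) (l ++ m)

mutual
/-- The isomorphism `Θ` on (planar representatives of) decorated trees, characterized
recursively by `Θ(X^k ∏ᵢ I_{aᵢ}(τᵢ)) = Σ_ℓ C(k;ℓ) X^{k−|ℓ|} ∏ᵢ I_{aᵢ−ℓᵢ}(Θ(τᵢ))`,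
`Θ(X^k) = X^k`, as a formal rational combination of planar trees. -/
noncomputable def ThT {L : Type} {d : ℕ} :
    RT (Nd d) (L × Nd d) → List (ℚ × RT (Nd d) (L × Nd d))
  | .node k l => (ThL k l).map fun p => (p.1, RT.node p.2.1 p.2.2)
/-- Auxiliary: processes the root branches, threading the remaining root decoration. -/
noncomputable def ThL {L : Type} {d : ℕ} (k : Nd d) :
    List ((L × Nd d) × RT (Nd d) (L × Nd d)) →
      List (ℚ × (Nd d × List ((L × Nd d) × RT (Nd d) (L × Nd d))))
  | [] => [(1, (k, []))]
  | (a, t) :: r =>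
      (Finset.Iic (k ⊓ a.2)).toList.flatMap fun ℓ =>
        (ThT t).flatMap fun p =>
          (ThL (k - ℓ) r).map fun q =>
            ((binom k ℓ : ℚ) * p.1 * q.1, (q.2.1, ((a.1, a.2 - ℓ), p.2) :: q.2.2))
end

/-!
Under root plugging the span of the decorated trees is a commutative algebra, freely generated by
the planted trees over the algebra of the monomials `X^k`. Let `D_c` be the derivation that lowers
by one the `c`-th entry of the decoration of a root edge, summed over the root edges. By Pascal's
rule the recursion for `Θ` says that `Θ(X_c x) = (X_c + D_c) Θ(x)`, and `Θ` is multiplicative on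
trees without root decoration. The derivations `D_c` commute with each other, hence with `Θ`, so
that `(X_c x) ρ̃ y = X_c (x ρ̃ y) + x ρ̃ D_c y`. Together with commutativity this reduces `ρ̃` to
trees without root decoration, on which it is root plugging, and another use of `Θ(X_c x)` turns it
into the explicit formula: the Chu–Vandermonde identity is replaced by its one-step case.
-/

namespace Swap

variable {V E : Type} [AddCommMonoid V]

lemma plugRoot_left {σ σ' : RT V E} (h : Swap σ σ') (τ : RT V E) :
    Swap (plugRoot σ τ) (plugRoot σ' τ) := by
  obtain ⟨w, m⟩ := τ
  cases h with
  | here v l₁ l₂ p q => simpa [plugRoot] using Swap.here (v + w) l₁ (l₂ ++ m) p q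
  | child v l₁ l₂ e h => simpa [plugRoot] using Swap.child (v + w) l₁ (l₂ ++ m) e h

lemma plugRoot_right (σ : RT V E) {τ τ' : RT V E} (h : Swap τ τ') :
    Swap (plugRoot σ τ) (plugRoot σ τ') := by
  obtain ⟨v, l⟩ := σ
  cases h with
  | here w l₁ l₂ p q => simpa [plugRoot] using Swap.here (v + w) (l ++ l₁) l₂ p q
  | child w l₁ l₂ e h => simpa [plugRoot] using Swap.child (v + w) (l ++ l₁) l₂ e h

end Swap

lemma qt_node_perm {V E : Type} (v : V) {l m : List (E × RT V E)} (h : l.Perm m) :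
    qt (.node v l) = qt (.node v m) := by
  suffices ∀ s, qt (.node v (s ++ l)) = qt (.node v (s ++ m)) from this []
  induction h with
  | nil => exact fun _ => rfl
  | cons p _ ih => exact fun s => by simpa using ih (s ++ [p])
  | swap p q l => exact fun s => Quot.sound (.here v s l q p)
  | trans _ _ ih₁ ih₂ => exact fun s => (ih₁ s).trans (ih₂ s)

namespace QT

variable {V E M : Type} [AddCommMonoid V] [CommMonoid M]

/-- Decorated trees form a commutative monoid under root plugging; its unit is the single
vertex decorated by `0`. -/
instance : CommMonoid (QT V E) where
  mul := Quot.map₂ plugRoot (fun σ _ _ h => h.plugRoot_right σ) fun _ _ τ h => h.plugRoot_left τ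
  one := qt (.node 0 [])
  mul_assoc := by
    rintro ⟨v, l⟩ ⟨w, m⟩ ⟨z, r⟩
    exact congrArg qt (by simp only [plugRoot, add_assoc, List.append_assoc])
  one_mul := by
    rintro ⟨v, l⟩
    exact congrArg qt (by simp only [plugRoot, zero_add, List.nil_append])
  mul_one := by
    rintro ⟨v, l⟩
    exact congrArg qt (by simp only [plugRoot, add_zero, List.append_nil])
  mul_comm := by
    rintro ⟨v, l⟩ ⟨w, m⟩
    exact (qt_node_perm (v + w) List.perm_append_comm).trans (by rw [add_comm]; rfl)

lemma qt_mul_qt (σ τ : RT V E) : qt σ * qt τ = qt (plugRoot σ τ) := rfl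

/-- The tree `X^v`: a single vertex decorated by `v`. -/
def vertex : Multiplicative V →* QT V E where
  toFun v := qt (.node v.toAdd [])
  map_one' := rfl
  map_mul' _ _ := rfl

/-- The planted tree `I_e(t)`: a root decorated by `0`, joined to the root of `t` by an
`e`-edge. -/
def plant (e : E) : QT V E → QT V E :=
  Quot.map (fun t => .node 0 [(e, t)]) fun _ _ h => .child 0 [] [] e h

lemma qt_node (v : V) (l : List (E × RT V E)) :
    qt (.node v l) = vertex (.ofAdd v) * (l.map fun p => plant p.1 (qt p.2)).prod := by
  induction l with
  | nil => exact (mul_one _).symm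
  | cons p l ih =>
    rw [List.map_cons, List.prod_cons, mul_left_comm, ← ih]
    exact congrArg qt (by simp only [plugRoot, zero_add, List.singleton_append])

/-- The homomorphism out of the monoid of decorated trees that is given on the
one-vertex trees by `f` and on the planted trees by `g`. -/
def lift (f : Multiplicative V →* M) (g : E → QT V E → M) : QT V E →* M where
  toFun := Quot.lift
    (fun | .node v l => f (.ofAdd v) * (l.map fun p => g p.1 (qt p.2)).prod) <| by
      rintro _ _ (⟨v, l₁, l₂, p, q⟩ | ⟨v, l₁, l₂, e, h⟩)
      · simp only [List.map_append, List.map_cons, List.prod_append, List.prod_cons,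
          mul_left_comm (g p.1 _)]
      · simp only [List.map_append, List.map_cons, show qt _ = qt _ from Quot.sound h]
  map_one' := by
    change f 1 * 1 = 1
    rw [map_one, one_mul]
  map_mul' := by
    rintro ⟨v, l⟩ ⟨w, m⟩
    change f (.ofAdd v * .ofAdd w) * ((l ++ m).map _).prod = _ * _ * (_ * _)
    rw [map_mul, List.map_append, List.prod_append, mul_mul_mul_comm]

lemma lift_vertex (f : Multiplicative V →* M) (g : E → QT V E → M) (v : Multiplicative V) :
    lift f g (vertex v) = f v :=
  mul_one _

lemma lift_plant (f : Multiplicative V →* M) (g : E → QT V E → M) (e : E) (t : QT V E) :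
    lift f g (plant e t) = g e t := by
  obtain ⟨t⟩ := t
  change f 1 * (g e (qt t) * 1) = g e (qt t)
  rw [map_one, one_mul, mul_one]

@[elab_as_elim]
lemma induction {p : QT V E → Prop} (t : QT V E) (vertex : ∀ v, p (vertex v))
    (plant : ∀ e t, p (plant e t)) (mul : ∀ s t, p s → p t → p (s * t)) : p t := by
  obtain ⟨v, l⟩ := t
  change p (qt _)
  rw [qt_node]
  refine mul _ _ (vertex _) (List.prod_induction _ mul (vertex 1) fun t ht => ?_)
  obtain ⟨q, -, rfl⟩ := List.mem_map.1 ht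
  exact plant _ _

end QT

/-- The span of the decorated trees as a commutative algebra under root plugging. -/
abbrev TreeAlg (V E : Type) [AddCommMonoid V] : Type := MonoidAlgebra ℚ (QT V E)

namespace TreeAlg

section Generators

variable {V E A : Type} [AddCommMonoid V] [CommSemiring A] [Algebra ℚ A]

/-- A tree, as a basis vector of the tree algebra. -/
noncomputable def ofTree (t : RT V E) : TreeAlg V E := .of ℚ _ (qt t)

/-- The monomial `X^v`. -/
noncomputable def X (v : V) : TreeAlg V E := .of ℚ _ (QT.vertex (.ofAdd v))

/-- The linear extension of the planting operator `I_e`. -/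
noncomputable def plant (e : E) : TreeAlg V E →ₗ[ℚ] TreeAlg V E :=
  MonoidAlgebra.mapDomainLinearMap ℚ ℚ (QT.plant e)

lemma plant_of (e : E) (t : QT V E) :
    plant e (.of ℚ _ t) = MonoidAlgebra.of ℚ _ (QT.plant e t) :=
  MonoidAlgebra.mapDomainLinearMap_single ..

lemma X_zero : X (0 : V) = (1 : TreeAlg V E) := by
  rw [X, ofAdd_zero, map_one, map_one]

lemma X_add (v w : V) : (X (v + w) : TreeAlg V E) = X v * X w := by
  rw [X, ofAdd_add, map_mul, map_mul, X, X]

lemma ofTree_node (v : V) (l : List (E × RT V E)) :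
    ofTree (.node v l) = X v * (l.map fun p => plant p.1 (ofTree p.2)).prod := by
  simp only [ofTree, X, plant_of, QT.qt_node, map_mul, map_list_prod, List.map_map,
    Function.comp_def]

lemma ofTree_mul_ofTree (s t : RT V E) : ofTree s * ofTree t = ofTree (plugRoot s t) := by
  rw [ofTree, ofTree, ← map_mul, QT.qt_mul_qt, ofTree]

@[elab_as_elim]
lemma induction_ofTree {p : TreeAlg V E → Prop} (x : TreeAlg V E) (ofTree : ∀ t, p (ofTree t))
    (add : ∀ x y, p x → p y → p (x + y)) (smul : ∀ (q : ℚ) x, p x → p (q • x)) : p x :=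
  MonoidAlgebra.induction_on x (Quot.ind ofTree) add smul

@[elab_as_elim]
lemma induction {p : TreeAlg V E → Prop} (x : TreeAlg V E) (X : ∀ v, p (X v))
    (plant : ∀ e x, p (plant e x)) (mul : ∀ x y, p x → p y → p (x * y))
    (add : ∀ x y, p x → p y → p (x + y)) (smul : ∀ (q : ℚ) x, p x → p (q • x)) : p x := by
  refine MonoidAlgebra.induction_on x (fun t => ?_) add smul
  induction t using QT.induction with
  | vertex v => exact X v.toAdd
  | plant e t => exact plant_of e t ▸ plant e _
  | mul s t hs ht => exact map_mul (MonoidAlgebra.of ℚ (QT V E)) s t ▸ mul _ _ hs ht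

/-- The algebra homomorphism given by `f` on the monomials and by `g e` on the image of
`plant e`. -/
noncomputable def lift (f : Multiplicative V →* A) (g : E → TreeAlg V E →ₗ[ℚ] A) :
    TreeAlg V E →ₐ[ℚ] A :=
  MonoidAlgebra.lift ℚ A _ (QT.lift f fun e t => g e (.of ℚ _ t))

lemma lift_X (f : Multiplicative V →* A) (g : E → TreeAlg V E →ₗ[ℚ] A) (v : V) :
    lift f g (X v) = f (.ofAdd v) := by
  rw [lift, X, MonoidAlgebra.lift_of, QT.lift_vertex]

lemma lift_plant (f : Multiplicative V →* A) (g : E → TreeAlg V E →ₗ[ℚ] A) (e : E)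
    (x : TreeAlg V E) : lift f g (plant e x) = g e x := by
  induction x using MonoidAlgebra.induction_on with
  | of t => rw [plant_of, lift, MonoidAlgebra.lift_of, QT.lift_plant]
  | add x y hx hy => rw [map_add, map_add, hx, hy, map_add]
  | smul q x hx => rw [map_smul, map_smul, hx, map_smul]

/-- The homomorphism that forgets the root decoration and applies `φ` to the branches. For
`φ = id` it maps `X^v ∏ᵢ I_{eᵢ}(tᵢ)` to `∏ᵢ I_{eᵢ}(tᵢ)`. -/
noncomputable def branchMap (φ : TreeAlg V E →ₗ[ℚ] TreeAlg V E) :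
    TreeAlg V E →ₐ[ℚ] TreeAlg V E :=
  lift 1 fun e => plant e ∘ₗ φ

lemma branchMap_X (φ : TreeAlg V E →ₗ[ℚ] TreeAlg V E) (v : V) : branchMap φ (X v) = 1 :=
  lift_X _ _ v

lemma branchMap_plant (φ : TreeAlg V E →ₗ[ℚ] TreeAlg V E) (e : E) (x : TreeAlg V E) :
    branchMap φ (plant e x) = plant e (φ x) :=
  lift_plant _ _ e x

lemma branchMap_prod_plant {ι : Type*} (φ : TreeAlg V E →ₗ[ℚ] TreeAlg V E) (l : List ι)
    (e : ι → E) (x : ι → TreeAlg V E) :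
    branchMap φ (l.map fun i => plant (e i) (x i)).prod =
      (l.map fun i => plant (e i) (φ (x i))).prod := by
  simp only [map_list_prod, List.map_map, Function.comp_def, branchMap_plant]

/-- The homomorphism into the dual numbers whose infinitesimal part is the derivation
`branchDerivation δ`. -/
noncomputable def branchDual (δ : E → TreeAlg V E →ₗ[ℚ] TreeAlg V E) :
    TreeAlg V E →ₐ[ℚ] DualNumber (TreeAlg V E) :=
  lift ((TrivSqZeroExt.inlHom (TreeAlg V E) (TreeAlg V E)).toMonoidHom.comp
      ((MonoidAlgebra.of ℚ _).comp QT.vertex)) fun e =>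
    (TrivSqZeroExt.inlAlgHom ℚ (TreeAlg V E) (TreeAlg V E)).toLinearMap ∘ₗ plant e +
      (TrivSqZeroExt.inrHom (TreeAlg V E) (TreeAlg V E)).restrictScalars ℚ ∘ₗ δ e

lemma fst_branchDual (δ : E → TreeAlg V E →ₗ[ℚ] TreeAlg V E) (x : TreeAlg V E) :
    (branchDual δ x).fst = x := by
  induction x using TreeAlg.induction with
  | X v => rw [branchDual, lift_X]; rfl
  | plant e x => rw [branchDual, lift_plant]; simp
  | mul x y hx hy => rw [map_mul, TrivSqZeroExt.fst_mul, hx, hy]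
  | add x y hx hy => rw [map_add, TrivSqZeroExt.fst_add, hx, hy]
  | smul q x hx => rw [map_smul, TrivSqZeroExt.fst_smul, hx]

/-- The derivation that kills the monomials `X^v` and maps `plant e x` to `δ e x`. -/
noncomputable def branchDerivation (δ : E → TreeAlg V E →ₗ[ℚ] TreeAlg V E) :
    Derivation ℚ (TreeAlg V E) (TreeAlg V E) :=
  Derivation.mk' ((TrivSqZeroExt.sndHom (TreeAlg V E) (TreeAlg V E)).restrictScalars ℚ ∘ₗ
    (branchDual δ).toLinearMap) fun x y => by
      simp [TrivSqZeroExt.snd_mul, fst_branchDual, mul_comm]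

lemma branchDerivation_apply (δ : E → TreeAlg V E →ₗ[ℚ] TreeAlg V E) (x : TreeAlg V E) :
    branchDerivation δ x = (branchDual δ x).snd :=
  rfl

lemma branchDerivation_X (δ : E → TreeAlg V E →ₗ[ℚ] TreeAlg V E) (v : V) :
    branchDerivation δ (X v) = 0 := by
  rw [branchDerivation_apply, branchDual, lift_X]
  rfl

lemma branchDerivation_plant (δ : E → TreeAlg V E →ₗ[ℚ] TreeAlg V E) (e : E)
    (x : TreeAlg V E) : branchDerivation δ (plant e x) = δ e x := by
  rw [branchDerivation_apply, branchDual, lift_plant]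
  simp

end Generators

end TreeAlg

section MultiIndex

variable {d : ℕ} {S : Type*} [NonUnitalNonAssocSemiring S]

@[elab_as_elim]
lemma nd_induction {p : Nd d → Prop} (k : Nd d) (zero : p 0)
    (add_single : ∀ c k, p k → p (k + Pi.single c 1)) : p k := by
  suffices ∀ j, p j → p (j + k) by simpa using this 0 zero
  induction k using Pi.single_induction with
  | zero => exact fun j hj => by rwa [add_zero]
  | add k ℓ hk hℓ => exact fun j hj => by rw [← add_assoc]; exact hℓ _ (hk _ hj)
  | single c n =>
    induction n with
    | zero => exact fun j hj => by rwa [Pi.single_zero, add_zero]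
    | succ n ih =>
      exact fun j hj => by rw [Pi.single_add, ← add_assoc]; exact add_single _ _ (ih _ hj)

lemma binom_eq_zero {k ℓ : Nd d} (h : ¬ ℓ ≤ k) : binom k ℓ = 0 := by
  obtain ⟨c, hc⟩ := not_forall.1 h
  exact Finset.prod_eq_zero (Finset.mem_univ c) (Nat.choose_eq_zero_of_lt (not_le.1 hc))

lemma binom_zero_right (k : Nd d) : binom k 0 = 1 :=
  Finset.prod_eq_one fun c _ => (k c).choose_zero_right

lemma nd_single_le_iff {c : Fin (d + 1)} {ℓ : Nd d} : Pi.single c 1 ≤ ℓ ↔ ℓ c ≠ 0 := by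
  rw [Pi.single, update_le_iff]
  simp [Nat.one_le_iff_ne_zero]

open scoped Classical in
lemma binom_add_single (c : Fin (d + 1)) (k ℓ : Nd d) :
    binom (k + Pi.single c 1) ℓ =
      binom k ℓ + if Pi.single c 1 ≤ ℓ then binom k (ℓ - Pi.single c 1) else 0 := by
  split_ifs with h
  · refine (Finset.prod_add_prod_eq (Finset.mem_univ c) ?_ ?_ ?_).symm
    · obtain ⟨n, hn⟩ := Nat.exists_eq_succ_of_ne_zero (nd_single_le_iff.1 h)
      simp [hn, Nat.choose_succ_succ, add_comm]
    · intro i _ hi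
      simp [hi]
    · intro i _ hi
      simp [hi]
  · have hc : ℓ c = 0 := by simpa [nd_single_le_iff] using h
    refine Finset.prod_congr rfl fun i _ => ?_
    rcases eq_or_ne i c with rfl | hi
    · simp [hc]
    · simp [hi]

/-- The binomial convolution of two families indexed by multi-indices. -/
def binomConv (u w : Nd d → S) (k : Nd d) : S :=
  ∑ ℓ ∈ Finset.Iic k, binom k ℓ • (u ℓ * w (k - ℓ))

lemma binomConv_zero (u w : Nd d → S) : binomConv u w 0 = u 0 * w 0 := by
  rw [binomConv, show Finset.Iic (0 : Nd d) = {0} from Finset.Iic_bot, Finset.sum_singleton,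
    binom_zero_right, one_smul, tsub_self]

lemma binomConv_add_single (u w : Nd d → S) (c : Fin (d + 1)) (k : Nd d) :
    binomConv u w (k + Pi.single c 1) =
      binomConv u (fun j => w (j + Pi.single c 1)) k +
        binomConv (fun j => u (j + Pi.single c 1)) w k := by
  classical
  simp only [binomConv, binom_add_single, add_smul, Finset.sum_add_distrib, ite_smul, zero_smul,
    ← Finset.sum_filter]
  congr 1
  · refine (Finset.sum_subset_zero_on_sdiff (Finset.Iic_subset_Iic.2 le_self_add)
      (fun ℓ hℓ => ?_) fun ℓ hℓ => ?_).symm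
    · rw [binom_eq_zero (by simpa using (Finset.mem_sdiff.1 hℓ).2), zero_smul]
    · rw [tsub_add_eq_add_tsub (Finset.mem_Iic.1 hℓ)]
  · refine Finset.sum_nbij' (· - Pi.single c 1) (· + Pi.single c 1) (fun ℓ hℓ => ?_)
      (fun ℓ hℓ => ?_) (fun ℓ hℓ => ?_) (fun _ _ => add_tsub_cancel_right _ _) fun ℓ hℓ => ?_
    · simpa using (Finset.mem_filter.1 hℓ).1
    · simpa using hℓ
    · exact tsub_add_cancel_of_le (Finset.mem_filter.1 hℓ).2
    · rw [tsub_add_cancel_of_le (Finset.mem_filter.1 hℓ).2,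
        tsub_tsub_eq_add_tsub_of_le (Finset.mem_filter.1 hℓ).2]

lemma derivation_binomConv {R A : Type*} [CommSemiring R] [CommSemiring A] [Algebra R A]
    (D : Derivation R A A) (u w : Nd d → A) (k : Nd d) :
    D (binomConv u w k) =
      binomConv u (fun j => D (w j)) k + binomConv (fun j => D (u j)) w k := by
  simp only [binomConv, map_sum, map_nsmul, Derivation.leibniz, smul_eq_mul, smul_add,
    Finset.sum_add_distrib, mul_comm (w _)]

lemma binomConv_mul_add {A : Type*} [CommSemiring A] (x : A) (u v w : Nd d → A) (k : Nd d) :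
    binomConv u (fun j => x * v j + w j) k = x * binomConv u v k + binomConv u w k := by
  simp only [binomConv, mul_add, mul_left_comm, smul_add, Finset.sum_add_distrib,
    Finset.mul_sum, mul_smul_comm]

end MultiIndex

section Expansion

variable {d : ℕ}

/-- The tree algebra for vertices decorated by `k ∈ ℕ^{d+1}` and edges decorated by a label
together with a multi-index. -/
abbrev NdTreeAlg (L : Type) (d : ℕ) : Type := TreeAlg (Nd d) (L × Nd d)

namespace TreeAlg

variable {L : Type}

lemma X_add_single (k : Nd d) (c : Fin (d + 1)) :
    (X (k + Pi.single c 1) : NdTreeAlg L d) = X (Pi.single c 1) * X k := by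
  rw [X_add, mul_comm]

open scoped Classical in
/-- The planting operator `I_{a-ℓ}`, where `a - ℓ` lowers the multi-index of the edge
decoration `a`, and the result is `0` if this leaves `ℕ^{d+1}`. -/
noncomputable def plantLower (a : L × Nd d) (ℓ : Nd d) :
    NdTreeAlg L d →ₗ[ℚ] NdTreeAlg L d :=
  if ℓ ≤ a.2 then plant (a.1, a.2 - ℓ) else 0

lemma plantLower_zero (a : L × Nd d) : plantLower a 0 = plant a := by
  rw [plantLower, if_pos zero_le, tsub_zero]

/-- The derivation which sums over the root branches, lowering by one the `c`-th entry of the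
edge decoration. -/
noncomputable def lowering (c : Fin (d + 1)) :
    Derivation ℚ (NdTreeAlg L d) (NdTreeAlg L d) :=
  branchDerivation fun a => plantLower a (Pi.single c 1)

lemma lowering_X (c : Fin (d + 1)) (k : Nd d) :
    lowering c (X k : NdTreeAlg L d) = 0 :=
  branchDerivation_X _ k

lemma lowering_plantLower (c : Fin (d + 1)) (a : L × Nd d) (ℓ : Nd d)
    (x : NdTreeAlg L d) :
    lowering c (plantLower a ℓ x) = plantLower a (ℓ + Pi.single c 1) x := by
  by_cases hℓ : ℓ ≤ a.2
  · rw [plantLower, if_pos hℓ, lowering, branchDerivation_plant, plantLower, plantLower,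
      tsub_tsub]
    congr 2
    exact propext (le_tsub_iff_left hℓ)
  · have hℓ' : ¬ ℓ + Pi.single c 1 ≤ a.2 := fun h => hℓ (le_self_add.trans h)
    rw [plantLower, if_neg hℓ, plantLower, if_neg hℓ', LinearMap.zero_apply, map_zero]

lemma lowering_comm (c c' : Fin (d + 1)) (x : NdTreeAlg L d) :
    lowering c (lowering c' x) = lowering c' (lowering c x) := by
  induction x using TreeAlg.induction with
  | X k => simp only [lowering_X, map_zero]
  | plant a x => simp only [← plantLower_zero, lowering_plantLower, zero_add,
      add_comm (Pi.single c 1)]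
  | mul x y hx hy => simp only [Derivation.leibniz, map_add, smul_eq_mul, hx, hy]; ring
  | add x y hx hy => simp only [map_add, hx, hy]
  | smul q x hx => simp only [Derivation.map_smul, hx]

lemma lowering_X_mul (c : Fin (d + 1)) (k : Nd d) (x : NdTreeAlg L d) :
    lowering c (X k * x) = X k * lowering c x := by
  rw [Derivation.leibniz, lowering_X, smul_zero, add_zero, smul_eq_mul]

lemma branchMap_plantLower (φ : NdTreeAlg L d →ₗ[ℚ] NdTreeAlg L d) (a : L × Nd d) (ℓ : Nd d)
    (x : NdTreeAlg L d) : branchMap φ (plantLower a ℓ x) = plantLower a ℓ (φ x) := by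
  unfold plantLower
  split_ifs
  · exact branchMap_plant φ _ x
  · exact map_zero _

lemma lowering_branchMap (φ : NdTreeAlg L d →ₗ[ℚ] NdTreeAlg L d) (c : Fin (d + 1))
    (x : NdTreeAlg L d) : lowering c (branchMap φ x) = branchMap φ (lowering c x) := by
  induction x using TreeAlg.induction with
  | X k => rw [branchMap_X, lowering_X, Derivation.map_one_eq_zero, map_zero]
  | plant a x =>
    simp only [← plantLower_zero, branchMap_plantLower, lowering_plantLower]
  | mul x y hx hy => simp only [map_mul, map_add, Derivation.leibniz, smul_eq_mul, hx, hy]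
  | add x y hx hy => simp only [map_add, hx, hy]
  | smul q x hx => simp only [map_smul, Derivation.map_smul, hx]

@[elab_as_elim]
lemma induction_X_mul {p : NdTreeAlg L d → Prop} (x : NdTreeAlg L d)
    (branchMap : ∀ x, p (branchMap .id x)) (X_mul : ∀ c x, p x → p (X (Pi.single c 1) * x))
    (add : ∀ x y, p x → p y → p (x + y)) (smul : ∀ (q : ℚ) x, p x → p (q • x)) : p x := by
  induction x using induction_ofTree with
  | ofTree t =>
    obtain ⟨k, l⟩ := t
    induction k using nd_induction with
    | zero =>
      rw [ofTree_node, X_zero, one_mul]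
      exact branchMap_prod_plant .id l Prod.fst (ofTree ·.2) ▸ branchMap _
    | add_single c k hk =>
      rw [ofTree_node, X_add_single, mul_assoc, ← ofTree_node]
      exact X_mul c _ hk
  | add x y hx hy => exact add x y hx hy
  | smul q x hx => exact smul q x hx

/-- The sum `Σ_ℓ C(k;ℓ) X^{k-|ℓ|} ∏ᵢ I_{aᵢ-ℓᵢ}(xᵢ)` attached to the branches `(aᵢ, xᵢ)`. -/
noncomputable def expand :
    List ((L × Nd d) × NdTreeAlg L d) → Nd d → NdTreeAlg L d
  | [] => X
  | p :: l => binomConv (fun ℓ => plantLower p.1 ℓ p.2) (expand l)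

lemma expand_zero (l : List ((L × Nd d) × NdTreeAlg L d)) :
    expand l 0 = (l.map fun p => plant p.1 p.2).prod := by
  induction l with
  | nil => exact X_zero
  | cons p l ih =>
    rw [expand, binomConv_zero, ih, plantLower_zero, List.map_cons, List.prod_cons]

lemma expand_add_single (l : List ((L × Nd d) × NdTreeAlg L d)) (k : Nd d)
    (c : Fin (d + 1)) :
    expand l (k + Pi.single c 1) =
      X (Pi.single c 1) * expand l k + lowering c (expand l k) := by
  induction l generalizing k with
  | nil => rw [expand, X_add_single, lowering_X, add_zero]
  | cons p l ih =>
    simp only [expand, binomConv_add_single, ih, binomConv_mul_add, derivation_binomConv,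
      lowering_plantLower, add_assoc]

end TreeAlg

end Expansion

namespace TreeAlg

variable {L : Type} {d : ℕ}

/-- The recursion `Θ(X^k ∏ᵢ I_{aᵢ}(tᵢ)) = Σ_ℓ C(k;ℓ) X^{k-|ℓ|} ∏ᵢ I_{aᵢ-ℓᵢ}(Θ(tᵢ))`, which
determines `Θ`. -/
def IsTheta (Θ : NdTreeAlg L d →ₗ[ℚ] NdTreeAlg L d) : Prop :=
  ∀ k l, Θ (ofTree (.node k l)) = expand (l.map fun p => (p.1, Θ (ofTree p.2))) k

namespace IsTheta

variable {Θ : NdTreeAlg L d →ₗ[ℚ] NdTreeAlg L d}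

lemma apply_X_single_mul (hΘ : IsTheta Θ) (c : Fin (d + 1)) (x : NdTreeAlg L d) :
    Θ (X (Pi.single c 1) * x) = X (Pi.single c 1) * Θ x + lowering c (Θ x) := by
  induction x using induction_ofTree with
  | ofTree t =>
    obtain ⟨k, l⟩ := t
    have h : X (Pi.single c 1) * ofTree (.node k l) = ofTree (.node (k + Pi.single c 1) l) := by
      rw [ofTree_node, ofTree_node, X_add_single, mul_assoc]
    rw [h, hΘ, hΘ, expand_add_single]
  | add x y hx hy => rw [mul_add, map_add, map_add, hx, hy, mul_add, map_add]; abel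
  | smul q x hx =>
    simp only [mul_smul_comm, map_smul, hx, Derivation.map_smul, smul_add]

lemma apply_branchMap_id (hΘ : IsTheta Θ) (x : NdTreeAlg L d) :
    Θ (branchMap .id x) = branchMap Θ x := by
  induction x using induction_ofTree with
  | ofTree t =>
    obtain ⟨k, l⟩ := t
    have h (φ : NdTreeAlg L d →ₗ[ℚ] NdTreeAlg L d) : branchMap φ (ofTree (.node k l)) =
        (l.map fun p => plant p.1 (φ (ofTree p.2))).prod := by
      rw [ofTree_node, map_mul, branchMap_X, one_mul, branchMap_prod_plant]
    have h₀ : branchMap .id (ofTree (.node k l)) = ofTree (.node 0 l) := by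
      rw [h, ofTree_node, X_zero, one_mul]; rfl
    rw [h₀, hΘ, expand_zero, h, List.map_map]; rfl
  | add x y hx hy => simp only [map_add, hx, hy]
  | smul q x hx => simp only [map_smul, hx]

lemma apply_lowering (hΘ : IsTheta Θ) (c : Fin (d + 1)) (x : NdTreeAlg L d) :
    Θ (lowering c x) = lowering c (Θ x) := by
  induction x using induction_X_mul with
  | branchMap x => simp only [lowering_branchMap, hΘ.apply_branchMap_id]
  | X_mul c' x hx =>
    simp only [lowering_X_mul, hΘ.apply_X_single_mul, hx, map_add, lowering_comm c c']
  | add x y hx hy => simp only [map_add, hx, hy]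
  | smul q x hx => simp only [Derivation.map_smul, map_smul, hx]

lemma apply_X_mul_prod_plant {ι : Type*} (hΘ : IsTheta Θ) (k : Nd d) (s : List ι)
    (a : ι → L × Nd d) (x : ι → NdTreeAlg L d) :
    Θ (X k * (s.map fun i => plant (a i) (x i)).prod) =
      expand (s.map fun i => (a i, Θ (x i))) k := by
  induction k using nd_induction with
  | zero =>
    have h := hΘ.apply_branchMap_id (s.map fun i => plant (a i) (x i)).prod
    rw [branchMap_prod_plant, branchMap_prod_plant] at h
    rw [X_zero, one_mul, expand_zero, List.map_map]
    exact h
  | add_single c k ih =>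
    rw [X_add_single, mul_assoc, hΘ.apply_X_single_mul, ih, expand_add_single]

end IsTheta

/-- The product transported along `Θ`, i.e. `x ρ̃ y = Θ(Θ⁻¹(x) Θ⁻¹(y))`. -/
noncomputable def transportMul (Θ : NdTreeAlg L d ≃ₗ[ℚ] NdTreeAlg L d) (x y : NdTreeAlg L d) :
    NdTreeAlg L d :=
  Θ (Θ.symm x * Θ.symm y)

section Transport

variable {Θ : NdTreeAlg L d ≃ₗ[ℚ] NdTreeAlg L d}

lemma transportMul_comm (x y : NdTreeAlg L d) : transportMul Θ x y = transportMul Θ y x := by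
  rw [transportMul, mul_comm, transportMul]

lemma transportMul_apply_apply (x y : NdTreeAlg L d) :
    transportMul Θ (Θ x) (Θ y) = Θ (x * y) := by
  simp only [transportMul, LinearEquiv.symm_apply_apply]

lemma transportMul_X_single_mul (hΘ : IsTheta Θ.toLinearMap) (c : Fin (d + 1))
    (x y : NdTreeAlg L d) :
    transportMul Θ (X (Pi.single c 1) * x) y =
      X (Pi.single c 1) * transportMul Θ x y + transportMul Θ x (lowering c y) := by
  obtain ⟨x, rfl⟩ := Θ.surjective x
  obtain ⟨y, rfl⟩ := Θ.surjective y
  have hX := hΘ.apply_X_single_mul c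
  have hD := hΘ.apply_lowering c
  simp only [LinearEquiv.coe_coe] at hX hD
  have hx : X (Pi.single c 1) * Θ x = Θ (X (Pi.single c 1) * x - lowering c x) := by
    rw [map_sub, hX, hD, add_sub_cancel_right]
  have hxy : lowering c (Θ (x * y)) = Θ (x * lowering c y) + Θ (lowering c x * y) := by
    rw [← hD, Derivation.leibniz, smul_eq_mul, smul_eq_mul, map_add, mul_comm y]
  rw [hx, ← hD, transportMul_apply_apply, transportMul_apply_apply, transportMul_apply_apply,
    sub_mul, map_sub, mul_assoc, hX, hxy, ← add_assoc, add_sub_cancel_right]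

lemma transportMul_X_mul_left (hΘ : IsTheta Θ.toLinearMap) (k m : Nd d)
    (zero : ∀ x y : NdTreeAlg L d, transportMul Θ (branchMap Θ x) (X m * branchMap Θ y) =
      Θ (X m * branchMap .id x) * Θ (branchMap .id y)) (x y : NdTreeAlg L d) :
    transportMul Θ (X k * branchMap Θ x) (X m * branchMap Θ y) =
      Θ (X m * branchMap .id x) * Θ (X k * branchMap .id y) := by
  have hX := hΘ.apply_X_single_mul
  have hD := hΘ.apply_lowering
  simp only [LinearEquiv.coe_coe] at hX hD
  induction k using nd_induction generalizing y with
  | zero => simpa only [X_zero, one_mul] using zero x y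
  | add_single c k ih =>
    rw [X_add_single, mul_assoc, transportMul_X_single_mul hΘ, lowering_X_mul,
      lowering_branchMap, ih, ih, ← lowering_branchMap, ← lowering_X_mul, hD, mul_assoc, hX,
      mul_add, mul_left_comm]

lemma transportMul_X_mul_branchMap (hΘ : IsTheta Θ.toLinearMap) (k m : Nd d)
    (x y : NdTreeAlg L d) :
    transportMul Θ (X k * branchMap Θ x) (X m * branchMap Θ y) =
      Θ (X m * branchMap .id x) * Θ (X k * branchMap .id y) := by
  have hε := hΘ.apply_branchMap_id
  simp only [LinearEquiv.coe_coe] at hε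
  have zero_zero (x y : NdTreeAlg L d) : transportMul Θ (branchMap Θ x) (branchMap Θ y) =
      Θ (branchMap .id x) * Θ (branchMap .id y) := by
    rw [← hε, ← hε, transportMul_apply_apply, ← map_mul, hε, map_mul, hε, hε]
  refine transportMul_X_mul_left hΘ k m (fun x y => ?_) x y
  rw [transportMul_comm, mul_comm (Θ _)]
  simpa only [X_zero, one_mul] using transportMul_X_mul_left hΘ m 0
    (by simpa only [X_zero, one_mul] using zero_zero) y x

theorem transportMul_ofTree (hΘ : IsTheta Θ.toLinearMap) (k m : Nd d)
    (l r : List ((L × Nd d) × RT (Nd d) (L × Nd d))) :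
    transportMul Θ (ofTree (.node k l)) (ofTree (.node m r)) =
      expand (l.map fun p => (p.1, ofTree p.2)) m *
        expand (r.map fun p => (p.1, ofTree p.2)) k := by
  have hnode (k : Nd d) (l : List ((L × Nd d) × RT (Nd d) (L × Nd d))) :
      ofTree (.node k l) =
        X k * branchMap Θ (l.map fun p => plant p.1 (Θ.symm (ofTree p.2))).prod := by
    simp only [ofTree_node, branchMap_prod_plant, LinearEquiv.coe_coe,
      LinearEquiv.apply_symm_apply]
  have hexpand (k : Nd d) (l : List ((L × Nd d) × RT (Nd d) (L × Nd d))) :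
      Θ (X k * branchMap .id (l.map fun p => plant p.1 (Θ.symm (ofTree p.2))).prod) =
        expand (l.map fun p => (p.1, ofTree p.2)) k := by
    simpa only [branchMap_prod_plant, LinearMap.id_apply, LinearEquiv.coe_coe,
      LinearEquiv.apply_symm_apply] using
      hΘ.apply_X_mul_prod_plant k l Prod.fst fun p => Θ.symm (ofTree p.2)
  rw [hnode, hnode, transportMul_X_mul_branchMap hΘ, hexpand, hexpand]

end Transport

end TreeAlg

section Multinomial

variable {d n : ℕ}

lemma ndMnom_cons (k ℓ : Nd d) (M : Fin n → Nd d) :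
    ndMnom k (Fin.cons ℓ M : Fin (n + 1) → Nd d) = binom k ℓ * ndMnom (k - ℓ) M := by
  rw [ndMnom, Fin.prod_univ_succ, ndMnom]
  congr 1
  · simp
  · refine Finset.prod_congr rfl fun i _ => ?_
    simp [Finset.sum_filter, Fin.sum_univ_succ, tsub_tsub]

lemma sum_le_of_ndMnom_ne_zero {k : Nd d} {M : Fin n → Nd d} (h : ndMnom k M ≠ 0) :
    ∑ i, M i ≤ k := by
  induction M using Fin.consInduction generalizing k with
  | elim0 => simp
  | cons ℓ M ih =>
    rw [ndMnom_cons] at h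
    have hℓ : ℓ ≤ k := by
      by_contra hk
      exact left_ne_zero_of_mul h (binom_eq_zero hk)
    rw [Fin.sum_cons, ← le_tsub_iff_left hℓ]
    exact ih (right_ne_zero_of_mul h)

lemma sum_Iic_fin_succ {A : Type*} [AddCommMonoid A] (a : Fin (n + 1) → Nd d)
    (f : (Fin (n + 1) → Nd d) → A) :
    ∑ M ∈ Finset.Iic a, f M =
      ∑ ℓ ∈ Finset.Iic (a 0), ∑ M ∈ Finset.Iic fun i => a i.succ, f (Fin.cons ℓ M) := by
  rw [← Finset.sum_product']
  refine Finset.sum_equiv (Fin.consEquiv fun _ => Nd d).symm (fun M => ?_) fun M _ => ?_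
  · simp [Pi.le_def, Fin.forall_fin_succ, Fin.consEquiv, Fin.tail]
  · exact congrArg f (Fin.cons_self_tail M).symm

end Multinomial

namespace TreeAlg

section ExplicitSum

variable {L : Type} {d : ℕ}

lemma expand_cons_inf (p : (L × Nd d) × NdTreeAlg L d) (l : List ((L × Nd d) × NdTreeAlg L d))
    (k : Nd d) :
    expand (p :: l) k = ∑ ℓ ∈ Finset.Iic (k ⊓ p.1.2),
      binom k ℓ • (plant (p.1.1, p.1.2 - ℓ) p.2 * expand l (k - ℓ)) := by
  refine (Finset.sum_subset_zero_on_sdiff (Finset.Iic_subset_Iic.2 inf_le_left)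
    (fun ℓ hℓ => ?_) fun ℓ hℓ => ?_).symm
  · have : ¬ ℓ ≤ p.1.2 := fun h => by simp_all
    simp only [plantLower, if_neg this, LinearMap.zero_apply, zero_mul, smul_zero]
  · simp only [plantLower, if_pos (le_inf_iff.1 (Finset.mem_Iic.1 hℓ)).2]

lemma expand_cons (p : (L × Nd d) × NdTreeAlg L d) (l : List ((L × Nd d) × NdTreeAlg L d))
    (k : Nd d) :
    expand (p :: l) k = ∑ ℓ ∈ Finset.Iic p.1.2,
      binom k ℓ • (plant (p.1.1, p.1.2 - ℓ) p.2 * expand l (k - ℓ)) := by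
  rw [expand_cons_inf]
  refine Finset.sum_subset_zero_on_sdiff (Finset.Iic_subset_Iic.2 inf_le_right)
    (fun ℓ hℓ => ?_) fun _ _ => rfl
  rw [binom_eq_zero fun h => by simp_all, zero_smul]

lemma plant_mul_ofTree_node (a : L × Nd d) (t : RT (Nd d) (L × Nd d)) (k : Nd d)
    (l : List ((L × Nd d) × RT (Nd d) (L × Nd d))) :
    plant a (ofTree t) * ofTree (.node k l) = ofTree (.node k ((a, t) :: l)) := by
  rw [ofTree_node, ofTree_node, List.map_cons, List.prod_cons, mul_left_comm]

lemma expand_ofTree (l : List ((L × Nd d) × RT (Nd d) (L × Nd d))) (k : Nd d) :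
    expand (l.map fun p => (p.1, ofTree p.2)) k =
      ∑ M ∈ Finset.Iic (fun i : Fin l.length => (l.get i).1.2),
        ndMnom k M • ofTree (.node (k - ∑ i, M i) (List.ofFn fun i : Fin l.length =>
          (((l.get i).1.1, (l.get i).1.2 - M i), (l.get i).2))) := by
  induction l generalizing k with
  | nil =>
    refine Eq.symm <| (Finset.sum_unique_nonempty (ι := Fin 0 → Nd d) _ _
      Finset.nonempty_Iic).trans ?_
    simp [expand, ndMnom, ofTree_node]
  | cons p l ih =>
    refine Eq.trans ?_ (sum_Iic_fin_succ (n := l.length) _ _).symm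
    rw [List.map_cons, expand_cons]
    refine Finset.sum_congr rfl fun ℓ _ => ?_
    rw [ih, Finset.mul_sum, Finset.smul_sum]
    refine Finset.sum_congr rfl fun M _ => ?_
    rw [ndMnom_cons, mul_smul_comm, smul_smul, plant_mul_ofTree_node, tsub_tsub]
    congr 3
    · exact congrArg (k - ·) (Fin.sum_cons ℓ M).symm
    · refine .trans ?_ (List.ofFn_succ (n := l.length)).symm
      rfl

lemma expand_ofTree_mul_expand_ofTree (l r : List ((L × Nd d) × RT (Nd d) (L × Nd d)))
    (k m : Nd d) :
    expand (l.map fun p => (p.1, ofTree p.2)) m * expand (r.map fun p => (p.1, ofTree p.2)) k =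
      ∑ ℓ ∈ Finset.Iic (fun i : Fin l.length => (l.get i).1.2),
        ∑ ℓ' ∈ Finset.Iic (fun i : Fin r.length => (r.get i).1.2),
          (ndMnom m ℓ * ndMnom k ℓ') • ofTree (.node (k + m - ∑ i, ℓ i - ∑ i, ℓ' i)
            ((List.ofFn fun i : Fin l.length =>
                (((l.get i).1.1, (l.get i).1.2 - ℓ i), (l.get i).2)) ++
              List.ofFn fun i : Fin r.length =>
                (((r.get i).1.1, (r.get i).1.2 - ℓ' i), (r.get i).2))) := by
  rw [expand_ofTree, expand_ofTree, Finset.sum_mul_sum]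
  refine Finset.sum_congr rfl fun ℓ _ => Finset.sum_congr rfl fun ℓ' _ => ?_
  rw [smul_mul_smul_comm, ofTree_mul_ofTree, plugRoot]
  by_cases h : ndMnom m ℓ * ndMnom k ℓ' = 0
  · rw [h, zero_smul, zero_smul]
  · rw [add_comm k, tsub_tsub, tsub_add_tsub_comm
      (sum_le_of_ndMnom_ne_zero (left_ne_zero_of_mul h))
      (sum_le_of_ndMnom_ne_zero (right_ne_zero_of_mul h))]

end ExplicitSum

end TreeAlg

lemma sum_flatMap {A ι : Type*} [AddMonoid A] (s : List ι) (f : ι → List A) :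
    (s.flatMap f).sum = (s.map fun i => (f i).sum).sum := by
  rw [List.flatMap, List.sum_flatten, List.map_map]
  rfl

namespace TreeAlg

section Span

variable {V E L : Type} {d : ℕ}

/-- The identification of the span of the decorated trees with the tree algebra. -/
noncomputable def ofSpan [AddCommMonoid V] : Span V E ≃ₗ[ℚ] TreeAlg V E :=
  (MonoidAlgebra.coeffLinearEquiv ℚ).symm

lemma ofSpan_bas [AddCommMonoid V] (t : RT V E) : ofSpan (bas t) = ofTree t := rfl

lemma ofSpan_combo [AddCommMonoid V] (s : List (ℚ × RT V E)) :
    ofSpan (combo s) = (s.map fun p => p.1 • ofTree p.2).sum := by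
  simp only [combo, map_list_sum, List.map_map, Function.comp_def, map_smul, ofSpan_bas]

lemma ofSpan_combo_ThT (k : Nd d) (l : List ((L × Nd d) × RT (Nd d) (L × Nd d))) :
    ofSpan (combo (ThT (.node k l))) =
      expand (l.map fun p => (p.1, ofSpan (combo (ThT p.2)))) k := by
  rw [ofSpan_combo, ThT, List.map_map]
  induction l generalizing k with
  | nil => simp [ThL, expand, ofTree_node]
  | cons p l ih =>
    obtain ⟨a, t⟩ := p
    rw [ThL, List.map_flatMap, sum_flatMap, Finset.sum_map_toList, List.map_cons, expand_cons_inf]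
    refine Finset.sum_congr rfl fun ℓ _ => ?_
    rw [← ih, ofSpan_combo, map_list_sum, List.map_map, ← List.sum_map_mul_right,
      List.map_flatMap, sum_flatMap, List.smul_sum, List.map_map]
    simp only [Function.comp_def, ← List.sum_map_mul_left, List.smul_sum, List.map_map, map_smul,
      smul_mul_smul_comm, plant_mul_ofTree_node, ← Nat.cast_smul_eq_nsmul ℚ, smul_smul,
      mul_assoc]

lemma ofSpan_mul [AddCommMonoid V] {P : Span V E →ₗ[ℚ] Span V E →ₗ[ℚ] Span V E}
    (hP : ∀ σ τ, P (bas σ) (bas τ) = bas (plugRoot σ τ)) (x y : Span V E) :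
    ofSpan (P x y) = ofSpan x * ofSpan y := by
  obtain ⟨x, rfl⟩ := ofSpan.symm.surjective x
  obtain ⟨y, rfl⟩ := ofSpan.symm.surjective y
  induction x using induction_ofTree with
  | ofTree s =>
    induction y using induction_ofTree with
    | ofTree t =>
      simp only [← ofSpan_bas, LinearEquiv.symm_apply_apply, hP]
      simp only [ofSpan_bas, ofTree_mul_ofTree]
    | add y z hy hz => simp only [map_add, hy, hz, mul_add]
    | smul q y hy => simp only [map_smul, hy, mul_smul_comm]
  | add x z hx hz => simp only [map_add, LinearMap.add_apply, hx, hz, add_mul]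
  | smul q x hx => simp only [map_smul, LinearMap.smul_apply, hx, smul_mul_assoc]

lemma isTheta_conj_ofSpan {Θ : Span (Nd d) (L × Nd d) →ₗ[ℚ] Span (Nd d) (L × Nd d)}
    (hΘ : ∀ t, Θ (bas t) = combo (ThT t)) : IsTheta (ofSpan.conj Θ) := fun k l => by
  simp only [← ofSpan_bas, LinearEquiv.conj_apply_apply, LinearEquiv.symm_apply_apply, hΘ,
    ofSpan_combo_ThT]

lemma ofSpan_transport (Θ : Span (Nd d) (L × Nd d) ≃ₗ[ℚ] Span (Nd d) (L × Nd d))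
    {P : Span (Nd d) (L × Nd d) →ₗ[ℚ] Span (Nd d) (L × Nd d) →ₗ[ℚ] Span (Nd d) (L × Nd d)}
    (hP : ∀ σ τ, P (bas σ) (bas τ) = bas (plugRoot σ τ)) (x y : Span (Nd d) (L × Nd d)) :
    ofSpan (Θ (P (Θ.symm x) (Θ.symm y))) =
      transportMul (ofSpan.symm ≪≫ₗ Θ ≪≫ₗ ofSpan) (ofSpan x) (ofSpan y) := by
  simp [transportMul, ← ofSpan_mul hP]

end Span

end TreeAlg

/-- **Explicit formula and symmetry of the transported root-plugging.**  Let `Θ` be the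
triangular linear isomorphism of the span of decorated trees given by the recursion
`Θ(X^k ∏ I_{aᵢ}(τᵢ)) = Σ_ℓ C(k;ℓ) X^{k−|ℓ|} ∏ I_{aᵢ−ℓᵢ}(Θτᵢ)`, and let `P` be the
bilinear extension of the root-plugging `ρ^{root}` (adding node decorations and joining
root branches).  Then the transported product
`σ ρ̃^{root} τ := Θ(Θ⁻¹(σ) ρ^{root} Θ⁻¹(τ))` is given, for
`σ = X^k ∏_{i=1}^n I_{aᵢ}(σᵢ)` and `τ = X^{k̄} ∏_{i=1}^{n̄} I_{āᵢ}(τᵢ)`, by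
`σ ρ̃^{root} τ = Σ_{ℓ,ℓ̄} C(k̄,ℓ)·C(k,ℓ̄) ·
   X^{k+k̄−|ℓ|−|ℓ̄|} ∏ᵢ I_{aᵢ−ℓᵢ}(σᵢ) ∏ᵢ I_{āᵢ−ℓ̄ᵢ}(τᵢ)`;
in particular `σ ρ̃^{root} τ = τ ρ̃^{root} σ`. -/
theorem transported_plugRoot_formula {L : Type} {d : ℕ}
    (Θ : Span (Nd d) (L × Nd d) ≃ₗ[ℚ] Span (Nd d) (L × Nd d))
    (hΘ : ∀ t : RT (Nd d) (L × Nd d), Θ (bas t) = combo (ThT t))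
    (P : Span (Nd d) (L × Nd d) →ₗ[ℚ] Span (Nd d) (L × Nd d) →ₗ[ℚ] Span (Nd d) (L × Nd d))
    (hP : ∀ σ τ : RT (Nd d) (L × Nd d), P (bas σ) (bas τ) = bas (plugRoot σ τ)) :
    (∀ (k kb : Nd d) (l m : List ((L × Nd d) × RT (Nd d) (L × Nd d))),
      Θ (P (Θ.symm (bas (RT.node k l))) (Θ.symm (bas (RT.node kb m))))
        = ∑ ℓ ∈ Finset.Iic (fun i : Fin l.length => (l.get i).1.2),
            ∑ ℓb ∈ Finset.Iic (fun i : Fin m.length => (m.get i).1.2),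
              ((ndMnom kb ℓ * ndMnom k ℓb : ℕ) : ℚ) •
                bas (RT.node (k + kb - (∑ i, ℓ i) - (∑ i, ℓb i))
                  ((List.ofFn fun i : Fin l.length =>
                      (((l.get i).1.1, (l.get i).1.2 - ℓ i), (l.get i).2))
                    ++ (List.ofFn fun i : Fin m.length =>
                      (((m.get i).1.1, (m.get i).1.2 - ℓb i), (m.get i).2)))))
    ∧ (∀ σ τ : RT (Nd d) (L × Nd d),
        Θ (P (Θ.symm (bas σ)) (Θ.symm (bas τ)))
          = Θ (P (Θ.symm (bas τ)) (Θ.symm (bas σ)))) := by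
  have hP' := TreeAlg.ofSpan_transport Θ hP
  refine ⟨fun k kb l m => TreeAlg.ofSpan.injective ?_, fun σ τ => TreeAlg.ofSpan.injective ?_⟩
  · rw [hP', TreeAlg.ofSpan_bas, TreeAlg.ofSpan_bas,
      TreeAlg.transportMul_ofTree (TreeAlg.isTheta_conj_ofSpan hΘ),
      TreeAlg.expand_ofTree_mul_expand_ofTree]
    simp only [Nat.cast_smul_eq_nsmul, map_sum, map_nsmul, TreeAlg.ofSpan_bas]
  · rw [hP', hP', TreeAlg.transportMul_comm]
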